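/- arXiv:2011.03786 — 2 statements merged into one kernel-verified Lean document; each statement's English description precedes it below -/
import Mathlib

section
/- Let α ∈ (0,1) be an irrational number and let (qₙ) be the sequence of denominators of the convergents of the regular continued fraction expansion of α. Then the set-difference t^s_{(qₙ)}(𝕋) \ t_{(qₙ)}(𝕋) has cardinality 𝔠 (the cardinality of the continuum). -/
open Filter Topology

noncomputable section

/-- The circle group `𝕋 = ℝ/ℤ`. -/
abbrev Circle1 : Type := AddCircle (1 : ℝ)

/-- A set of naturals has natural density zero. -/
def DensityZero (A : Set ℕ) : Prop :=
  Tendsto (fun n : ℕ => ((A ∩ Set.Icc 1 n).ncard : ℝ) / n) atTop (𝓝 0)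

/-- Statistical convergence to `0` of a sequence in the circle. -/
def StatTendstoZero (x : ℕ → Circle1) : Prop :=
  ∀ ε : ℝ, 0 < ε → DensityZero {n : ℕ | ε ≤ ‖x n‖}

/-- The characterized subgroup `t_(a_n)(𝕋)`. -/
def charSet (a : ℕ → ℤ) : Set Circle1 :=
  {x : Circle1 | Tendsto (fun n : ℕ => a n • x) atTop (𝓝 0)}

/-- The statistically characterized subgroup `t^s_(a_n)(𝕋)`. -/
def statCharSet (a : ℕ → ℤ) : Set Circle1 :=
  {x : Circle1 | StatTendstoZero (fun n : ℕ => a n • x)}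

namespace CF

/-- Gauss-map orbit of `α`: `G α 0 = α`, `G α (n+1) = {1 / G α n}`. -/
def G (α : ℝ) : ℕ → ℝ
  | 0 => α
  | n + 1 => Int.fract (G α n)⁻¹

/-- The partial quotients of the regular continued fraction `α = [0; a 1, a 2, …]`
(with the convention `a 0 = 0`). -/
def a (α : ℝ) : ℕ → ℕ
  | 0 => 0
  | n + 1 => ⌊(G α n)⁻¹⌋₊

/-- Denominators of the convergents of the continued fraction of `α`. -/
def q (α : ℝ) : ℕ → ℕ
  | 0 => 1
  | 1 => a α 1
  | (n + 2) => a α (n + 2) * q α (n + 1) + q α n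

/-- Numerators of the convergents of the continued fraction of `α`. -/
def p (α : ℝ) : ℕ → ℕ
  | 0 => 0
  | 1 => 1
  | (n + 2) => a α (n + 2) * p α (n + 1) + p α n

/-- `θ n = q n * α - p n`. -/
def θ (α : ℝ) (n : ℕ) : ℝ := (q α n : ℝ) * α - (p α n : ℝ)

end CF

section Density

/-- A bounded-width neighbourhood of a quadratically sparse set has natural density zero. -/
theorem densityZero_of_sparse {m : ℕ → ℕ} (hm : ∀ k, k ^ 2 ≤ m k) (R : ℕ) {A : Set ℕ}
    (hA : ∀ n ∈ A, ∃ k, ((n : ℤ) - m k).natAbs < R) : DensityZero A := by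
  have hcard : ∀ N : ℕ, (A ∩ Set.Icc 1 N).ncard ≤ (Nat.sqrt (N + R) + 1) * (2 * R) := by
    intro N
    have hsub : A ∩ Set.Icc 1 N ⊆
        (((Finset.range (Nat.sqrt (N + R) + 1) ×ˢ Finset.range (2 * R)).image
          (fun x => m x.1 + x.2 - R) : Finset ℕ) : Set ℕ) := by
      rintro n ⟨hnA, -, hnN⟩
      obtain ⟨k, hk⟩ := hA n hnA
      have hmk := hm k
      have hk' : k ≤ Nat.sqrt (N + R) := by
        rw [Nat.le_sqrt']
        omega
      simp only [Finset.coe_image, Set.mem_image, Finset.mem_coe, Finset.mem_product,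
        Finset.mem_range, Prod.exists]
      exact ⟨k, n + R - m k, ⟨by omega, by omega⟩, by omega⟩
    calc (A ∩ Set.Icc 1 N).ncard ≤ _ := Set.ncard_le_ncard hsub (Finset.finite_toSet _)
      _ = _ := Set.ncard_coe_finset _
      _ ≤ _ := Finset.card_image_le
      _ = _ := by simp
  have hlim : Tendsto (fun N : ℕ => (6 * R : ℝ) / √(N : ℝ)) atTop (𝓝 0) :=
    tendsto_const_nhds.div_atTop (Real.tendsto_sqrt_atTop.comp tendsto_natCast_atTop_atTop)
  refine tendsto_of_tendsto_of_tendsto_of_le_of_le' tendsto_const_nhds hlim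
    (Eventually.of_forall fun N => by positivity) ?_
  filter_upwards [eventually_ge_atTop (R + 1)] with N hN
  have hN1 : (1 : ℝ) ≤ N := by exact_mod_cast (by omega : 1 ≤ N)
  have hs1 : (1 : ℝ) ≤ √(N : ℝ) := Real.one_le_sqrt.mpr hN1
  have hsq : √(N : ℝ) * √(N : ℝ) = N := Real.mul_self_sqrt (by positivity)
  have hsqrt : (Nat.sqrt (N + R) : ℝ) ≤ 2 * √(N : ℝ) := by
    have h1 : ((Nat.sqrt (N + R) : ℕ) : ℝ) ^ 2 ≤ 4 * N := by
      have := Nat.sqrt_le' (N + R)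
      exact_mod_cast (by omega : Nat.sqrt (N + R) ^ 2 ≤ 4 * N)
    refine abs_le_of_sq_le_sq' ?_ (by positivity) |>.2
    nlinarith
  have hc : ((A ∩ Set.Icc 1 N).ncard : ℝ) ≤ (Nat.sqrt (N + R) + 1) * (2 * R) := by
    exact_mod_cast hcard N
  rw [div_le_div_iff₀ (by positivity) (by positivity)]
  have hR : (0 : ℝ) ≤ R := by positivity
  calc ((A ∩ Set.Icc 1 N).ncard : ℝ) * √(N : ℝ)
      ≤ ((2 * √(N : ℝ) + √(N : ℝ)) * (2 * R)) * √(N : ℝ) := by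
        gcongr
        refine hc.trans ?_
        gcongr
    _ = 6 * R * (√(N : ℝ) * √(N : ℝ)) := by ring
    _ = 6 * R * N := by rw [hsq]

end Density

section Lacunary

/-- A sequence of circle elements `u k` on which the multipliers `Q n` act negligibly away from
the sparse indices `m k`, but substantially at `n = m k`. -/
structure LacunaryFamily (Q : ℕ → ℤ) (m : ℕ → ℕ) (u : ℕ → Circle1) : Prop where
  apply_zero : Q 0 = 1
  sq_le : ∀ k, k ^ 2 ≤ m k
  gap : ∀ k j, j ≠ k → k ≤ ((m k : ℤ) - m j).natAbs
  inj : Function.Injective m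
  norm_le : ∀ n k, ‖Q n • u k‖ ≤
    4 * ((7 / 8 : ℝ) ^ ((n : ℤ) - m k).natAbs * (7 / 8 : ℝ) ^ ((n : ℤ) - m k).natAbs)
  le_norm : ∀ k, 1 / 3 ≤ ‖Q (m k) • u k‖

theorem summable_pow_natAbs : Summable (fun z : ℤ => (7 / 8 : ℝ) ^ z.natAbs) := by
  have h : Summable (fun n : ℕ => (7 / 8 : ℝ) ^ n) :=
    summable_geometric_of_lt_one (by norm_num) (by norm_num)
  exact Summable.of_nat_of_neg (by simpa using h) (by simpa using h)

namespace LacunaryFamily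

variable {Q : ℕ → ℤ} {m : ℕ → ℕ} {u : ℕ → Circle1} {e : ℕ → ℤ}

theorem injective_sub (h : LacunaryFamily Q m u) (n : ℕ) :
    Function.Injective (fun k => (n : ℤ) - m k) := by
  intro i j hij
  apply h.inj
  simp only at hij
  omega

theorem norm_smul_le (h : LacunaryFamily Q m u) {n R : ℕ} (he : ∀ k, |e k| ≤ 1)
    (hR : ∀ k, e k ≠ 0 → R ≤ ((n : ℤ) - m k).natAbs) (k : ℕ) :
    ‖Q n • e k • u k‖ ≤ 4 * (7 / 8 : ℝ) ^ R * (7 / 8 : ℝ) ^ ((n : ℤ) - m k).natAbs := by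
  by_cases hk : e k = 0
  · simp only [hk, zero_smul, smul_zero, norm_zero]
    positivity
  · have hpow : (7 / 8 : ℝ) ^ ((n : ℤ) - m k).natAbs ≤ (7 / 8 : ℝ) ^ R :=
      pow_le_pow_of_le_one (by norm_num) (by norm_num) (hR k hk)
    have hnorm : ‖Q n • e k • u k‖ = ‖Q n • u k‖ := by
      have habs := abs_le.mp (he k)
      rcases (by omega : e k = 1 ∨ e k = -1) with h1 | h1 <;> simp [h1]
    rw [hnorm, mul_assoc]
    refine (h.norm_le n k).trans ?_
    gcongr

theorem summable_smul (h : LacunaryFamily Q m u) (he : ∀ k, |e k| ≤ 1) :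
    Summable (fun k => e k • u k) := by
  refine Summable.of_norm_bounded
    (((summable_pow_natAbs.comp_injective (h.injective_sub 0)).mul_left (4 * (7 / 8 : ℝ) ^ 0)))
    fun k => ?_
  simpa [h.apply_zero] using h.norm_smul_le (n := 0) (R := 0) he (fun _ _ => Nat.zero_le _) k

theorem norm_smul_tsum_le (h : LacunaryFamily Q m u) {n R : ℕ} (he : ∀ k, |e k| ≤ 1)
    (hR : ∀ k, e k ≠ 0 → R ≤ ((n : ℤ) - m k).natAbs) :
    ‖Q n • ∑' k, e k • u k‖ ≤ 4 * (7 / 8 : ℝ) ^ R * ∑' z : ℤ, (7 / 8 : ℝ) ^ z.natAbs := by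
  have hinj := h.injective_sub n
  have hsum := summable_pow_natAbs.comp_injective hinj
  rw [← (h.summable_smul he).tsum_const_smul]
  calc ‖∑' k, Q n • e k • u k‖
      ≤ ∑' k, 4 * (7 / 8 : ℝ) ^ R * (7 / 8 : ℝ) ^ ((n : ℤ) - m k).natAbs :=
        tsum_of_norm_bounded (hsum.mul_left _).hasSum (h.norm_smul_le he hR)
    _ = 4 * (7 / 8 : ℝ) ^ R * ∑' k, (7 / 8 : ℝ) ^ ((n : ℤ) - m k).natAbs := tsum_mul_left
    _ ≤ _ := by
        gcongr
        exact tsum_comp_le_tsum_of_inj summable_pow_natAbs (fun _ => by positivity) hinj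

theorem exists_pow_lt {ε : ℝ} (hε : 0 < ε) : ∃ R : ℕ, ∀ r ≥ R,
    4 * (7 / 8 : ℝ) ^ r * ∑' z : ℤ, (7 / 8 : ℝ) ^ z.natAbs < ε := by
  have hlim : Tendsto (fun r : ℕ => 4 * (7 / 8 : ℝ) ^ r * ∑' z : ℤ, (7 / 8 : ℝ) ^ z.natAbs)
      atTop (𝓝 0) := by
    simpa using ((tendsto_pow_atTop_nhds_zero_of_lt_one (r := (7 / 8 : ℝ)) (by norm_num)
      (by norm_num)).const_mul 4).mul_const (∑' z : ℤ, (7 / 8 : ℝ) ^ z.natAbs)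
  exact eventually_atTop.mp (hlim.eventually_lt_const hε)

theorem tsum_mem_statCharSet (h : LacunaryFamily Q m u) (he : ∀ k, |e k| ≤ 1) :
    ∑' k, e k • u k ∈ statCharSet Q := by
  intro ε hε
  obtain ⟨R, hR⟩ := exists_pow_lt hε
  refine densityZero_of_sparse h.sq_le R fun n hn => ?_
  by_contra! hfar
  exact absurd (h.norm_smul_tsum_le he fun k _ => hfar k) (not_le.mpr ((hR R le_rfl).trans_le hn))

theorem tsum_notMem_charSet (h : LacunaryFamily Q m u) (he : ∀ k, |e k| ≤ 1)
    (hinf : ∀ K, ∃ k ≥ K, e k ≠ 0) : ∑' k, e k • u k ∉ charSet Q := by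
  intro hmem
  have hnorm : Tendsto (fun n => ‖Q n • ∑' k, e k • u k‖) atTop (𝓝 0) := by
    simpa using Tendsto.norm hmem
  obtain ⟨N, hN⟩ := eventually_atTop.mp (hnorm.eventually_lt_const (by norm_num : (0 : ℝ) < 1 / 6))
  obtain ⟨R, hR⟩ := exists_pow_lt (by norm_num : (0 : ℝ) < 1 / 6)
  obtain ⟨k, hk, hek⟩ := hinf (max N R)
  set e' := Function.update e k 0 with he'
  have he_update : ∀ j, |e' j| ≤ 1 := by
    intro j
    by_cases hj : j = k
    · simp [he', hj]
    · simpa [he', hj] using he j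
  have htail := h.norm_smul_tsum_le (n := m k) (R := k) he_update fun j hj => by
    have hjk : j ≠ k := by
      rintro rfl
      simp [he'] at hj
    exact h.gap k j hjk
  have hsplit : ∑' j, e j • u j = e k • u k + ∑' j, e' j • u j := by
    rw [(h.summable_smul he).tsum_eq_add_tsum_ite k]
    congr 1
    refine tsum_congr fun j => ?_
    by_cases hj : j = k <;> simp [he', hj]
  have hmain : ‖Q (m k) • e k • u k‖ = ‖Q (m k) • u k‖ := by
    have habs := abs_le.mp (he k)
    rcases (by omega : e k = 1 ∨ e k = -1) with h1 | h1 <;> simp [h1]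
  have hmk : N ≤ m k := by
    have h1 := h.sq_le k
    have h2 : k ≤ k ^ 2 := Nat.le_self_pow (by norm_num) k
    omega
  have hsmall := hN (m k) hmk
  rw [hsplit, smul_add] at hsmall
  have hlow := h.le_norm k
  have hRk := hR k (by omega)
  have htri := norm_sub_le (Q (m k) • e k • u k + Q (m k) • ∑' j, e' j • u j)
    (Q (m k) • ∑' j, e' j • u j)
  rw [add_sub_cancel_right, hmain] at htri
  linarith

theorem continuum_le (h : LacunaryFamily Q m u) :
    Cardinal.continuum ≤ Cardinal.mk ↥(statCharSet Q \ charSet Q) := by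
  classical
  -- every bit of `S` is repeated infinitely often, and so is an extra bit `1`
  let c : Set ℕ → ℕ → ℤ := fun S k =>
    if k.unpair.1 = 0 ∨ k.unpair.1 - 1 ∈ S then 1 else 0
  have hc : ∀ S k, |c S k| ≤ 1 := by
    intro S k
    by_cases hk : k.unpair.1 = 0 ∨ k.unpair.1 - 1 ∈ S <;> simp [c, hk]
  have hmem : ∀ S, ∑' k, c S k • u k ∈ statCharSet Q \ charSet Q := fun S =>
    ⟨h.tsum_mem_statCharSet (hc S), h.tsum_notMem_charSet (hc S) fun K =>
      ⟨Nat.pair 0 K, Nat.right_le_pair 0 K, by simp [c]⟩⟩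
  have hinj : Function.Injective
      (fun S => (⟨_, hmem S⟩ : ↥(statCharSet Q \ charSet Q))) := by
    intro S T hST
    by_contra hne
    have heq : ∑' k, c S k • u k = ∑' k, c T k • u k := congrArg Subtype.val hST
    obtain ⟨i, hi⟩ : ∃ i, ¬ (i ∈ S ↔ i ∈ T) := by
      by_contra! hall
      exact hne (Set.ext hall)
    have hd : ∀ k, |(c S - c T) k| ≤ 1 := by
      intro k
      simp only [c, Pi.sub_apply]
      split_ifs <;> simp
    refine h.tsum_notMem_charSet hd (fun K => ⟨Nat.pair (i + 1) K, Nat.right_le_pair _ K, ?_⟩) ?_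
    · simp only [c, Pi.sub_apply, Nat.unpair_pair]
      by_cases h1 : i ∈ S <;> by_cases h2 : i ∈ T <;> simp_all
    · have hzero : ∑' k, (c S - c T) k • u k = 0 := by
        simp only [Pi.sub_apply, sub_smul]
        rw [(h.summable_smul (hc S)).tsum_sub (h.summable_smul (hc T)), heq, sub_self]
      rw [hzero]
      simp [charSet]
  rw [← Cardinal.mk_set_nat]
  exact Cardinal.mk_le_of_injective hinj

end LacunaryFamily

end Lacunary

namespace CF

variable {α : ℝ}

theorem G_mem (hα : α ∈ Set.Ioo (0 : ℝ) 1) (hirr : Irrational α) (n : ℕ) :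
    G α n ∈ Set.Ioo (0 : ℝ) 1 ∧ Irrational (G α n) := by
  induction n with
  | zero => exact ⟨hα, hirr⟩
  | succ n ih =>
    have hfract : Irrational (G α (n + 1)) := by
      change Irrational (Int.fract (G α n)⁻¹)
      rw [Int.fract]
      exact (irrational_inv_iff.mpr ih.2).sub_intCast _
    exact ⟨⟨lt_of_le_of_ne (Int.fract_nonneg _) hfract.ne_zero.symm, Int.fract_lt_one _⟩, hfract⟩

theorem inv_G (hα : α ∈ Set.Ioo (0 : ℝ) 1) (hirr : Irrational α) (n : ℕ) :
    (G α n)⁻¹ = a α (n + 1) + G α (n + 1) := by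
  have hpos := (G_mem hα hirr n).1.1
  have hfloor : ((⌊(G α n)⁻¹⌋₊ : ℕ) : ℝ) = (⌊(G α n)⁻¹⌋ : ℤ) :=
    natCast_floor_eq_intCast_floor (by positivity)
  simp only [a, G, hfloor, Int.floor_add_fract]

theorem a_pos (hα : α ∈ Set.Ioo (0 : ℝ) 1) (hirr : Irrational α) (n : ℕ) :
    1 ≤ a α (n + 1) := by
  have hmem := (G_mem hα hirr n).1
  exact Nat.le_floor (by exact_mod_cast ((one_lt_inv₀ hmem.1).mpr hmem.2).le)

theorem θ_succ (hα : α ∈ Set.Ioo (0 : ℝ) 1) (hirr : Irrational α) (n : ℕ) :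
    θ α (n + 1) = -G α (n + 1) * θ α n := by
  induction n with
  | zero =>
    have hinv := inv_G hα hirr 0
    have hG0 : G α 0 = α := rfl
    have hmul : α * (a α 1 + G α 1) = 1 := by
      rw [← hinv, hG0, mul_inv_cancel₀ hα.1.ne']
    have h0 : θ α 0 = α := by simp [θ, q, p]
    have h1 : θ α 1 = a α 1 * α - 1 := by simp [θ, q, p]
    rw [h0, h1]
    linear_combination hmul
  | succ n ih =>
    have hinv := inv_G hα hirr (n + 1)
    have hne := (G_mem hα hirr (n + 1)).1.1.ne'
    have hmul : G α (n + 1) * (a α (n + 2) + G α (n + 2)) = 1 := by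
      rw [← hinv, mul_inv_cancel₀ hne]
    have hrec : θ α (n + 2) = a α (n + 2) * θ α (n + 1) + θ α n := by
      simp only [θ, q, p]
      push_cast
      ring
    rw [hrec, ih]
    linear_combination (-θ α n) * hmul

theorem abs_θ_mul (hα : α ∈ Set.Ioo (0 : ℝ) 1) (hirr : Irrational α) (n : ℕ) :
    |θ α n| * (q α (n + 1) + G α (n + 1) * q α n) = 1 := by
  induction n with
  | zero =>
    have hinv := inv_G hα hirr 0
    have h0 : θ α 0 = α := by simp [θ, q, p]
    have hq1 : q α 1 = a α 1 := rfl
    have hq0 : q α 0 = 1 := rfl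
    have hG0 : G α 0 = α := rfl
    rw [hG0] at hinv
    rw [h0, hq1, hq0, abs_of_pos hα.1, Nat.cast_one, mul_one, ← hinv, mul_inv_cancel₀ hα.1.ne']
  | succ n ih =>
    have hinv := inv_G hα hirr (n + 1)
    have hpos := (G_mem hα hirr (n + 1)).1.1
    have hmul : G α (n + 1) * (a α (n + 2) + G α (n + 2)) = 1 := by
      rw [← hinv, mul_inv_cancel₀ hpos.ne']
    have hrec : (q α (n + 2) : ℝ) = a α (n + 2) * q α (n + 1) + q α n := by
      simp [q]
    rw [θ_succ hα hirr, abs_mul, abs_neg, abs_of_pos hpos, hrec]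
    linear_combination ih + |θ α n| * q α (n + 1) * hmul

theorem q_add_le (hα : α ∈ Set.Ioo (0 : ℝ) 1) (hirr : Irrational α) (n : ℕ) :
    q α (n + 1) + q α n ≤ q α (n + 2) := by
  have ha := a_pos hα hirr (n + 1)
  simp only [q]
  nlinarith

theorem q_le_succ (hα : α ∈ Set.Ioo (0 : ℝ) 1) (hirr : Irrational α) (n : ℕ) :
    q α n ≤ q α (n + 1) := by
  cases n with
  | zero => exact a_pos hα hirr 0
  | succ n => exact (Nat.le_add_right _ _).trans (q_add_le hα hirr n)

theorem q_pos (hα : α ∈ Set.Ioo (0 : ℝ) 1) (hirr : Irrational α) (n : ℕ) : 0 < q α n := by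
  induction n with
  | zero => exact Nat.one_pos
  | succ n ih => exact ih.trans_le (q_le_succ hα hirr n)

theorem q_le_pow_mul (hα : α ∈ Set.Ioo (0 : ℝ) 1) (hirr : Irrational α) (n j : ℕ) :
    (q α n : ℝ) ≤ 2 * (3 / 4 : ℝ) ^ j * q α (n + j) := by
  induction j using Nat.twoStepInduction with
  | zero =>
    have : (0 : ℝ) ≤ q α n := by positivity
    simp only [pow_zero, add_zero]
    linarith
  | one =>
    have h1 : (q α n : ℝ) ≤ q α (n + 1) := by exact_mod_cast q_le_succ hα hirr n
    have : (0 : ℝ) ≤ q α n := by positivity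
    linarith
  | more j ih _ =>
    have h1 : (q α (n + j + 1) : ℝ) + q α (n + j) ≤ q α (n + j + 2) := by
      exact_mod_cast q_add_le hα hirr (n + j)
    have h2 : (q α (n + j) : ℝ) ≤ q α (n + j + 1) := by
      exact_mod_cast q_le_succ hα hirr (n + j)
    have h3 : (0 : ℝ) ≤ q α (n + j + 2) := by positivity
    calc (q α n : ℝ) ≤ 2 * (3 / 4 : ℝ) ^ j * q α (n + j) := ih
      _ ≤ 2 * (3 / 4 : ℝ) ^ j * ((3 / 4) ^ 2 * q α (n + j + 2)) := by
        gcongr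
        linarith
      _ = 2 * (3 / 4 : ℝ) ^ (j + 2) * q α (n + (j + 2)) := by
        rw [← add_assoc]
        ring

theorem abs_θ_mul_q_le (hα : α ∈ Set.Ioo (0 : ℝ) 1) (hirr : Irrational α) (n : ℕ) :
    |θ α n| * q α (n + 1) ≤ 1 := by
  have h1 := abs_θ_mul hα hirr n
  have h2 := (G_mem hα hirr (n + 1)).1.1
  have h3 : 0 ≤ |θ α n| * (G α (n + 1) * q α n) := by positivity
  linarith

theorem one_le_abs_θ_mul_q (hα : α ∈ Set.Ioo (0 : ℝ) 1) (hirr : Irrational α) (n : ℕ) :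
    1 ≤ 2 * (|θ α n| * q α (n + 1)) := by
  have h1 := abs_θ_mul hα hirr n
  have h2 := (G_mem hα hirr (n + 1)).1
  have h3 : (q α n : ℝ) ≤ q α (n + 1) := by exact_mod_cast q_le_succ hα hirr n
  have h4 : G α (n + 1) * q α n ≤ 1 * q α (n + 1) := by
    gcongr
    exact h2.2.le
  have h5 : |θ α n| * (G α (n + 1) * q α n) ≤ |θ α n| * (1 * q α (n + 1)) := by gcongr
  linarith

theorem exists_three_mul_q_le (hα : α ∈ Set.Ioo (0 : ℝ) 1) (hirr : Irrational α) (n : ℕ) :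
    ∃ m, n ≤ m ∧ m ≤ n + 1 ∧ 3 * q α m ≤ 2 * q α (m + 1) := by
  by_cases h : 3 * q α n ≤ 2 * q α (n + 1)
  · exact ⟨n, le_rfl, by omega, h⟩
  · have h1 := q_add_le hα hirr n
    exact ⟨n + 1, by omega, le_rfl, by change _ ≤ 2 * q α (n + 2); omega⟩

theorem coe_norm_le (x : ℝ) : ‖(x : Circle1)‖ ≤ |x| := by
  rw [UnitAddCircle.norm_eq]
  simpa using round_le x 0

theorem third_le_norm_coe {x : ℝ} (h1 : 1 / 3 ≤ |x|) (h2 : |x| ≤ 2 / 3) :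
    1 / 3 ≤ ‖(x : Circle1)‖ := by
  rw [UnitAddCircle.norm_eq]
  generalize round x = z
  have hz : z ≤ -1 ∨ z = 0 ∨ 1 ≤ z := by omega
  rcases hz with hz | rfl | hz
  · have hz' : (z : ℝ) ≤ -1 := by exact_mod_cast hz
    exact le_trans (by linarith [neg_le_of_abs_le h2]) (le_abs_self _)
  · simpa using h1
  · have hz' : (1 : ℝ) ≤ z := by exact_mod_cast hz
    exact le_trans (by linarith [le_of_abs_le h2]) (neg_le_abs _)

/-- Multiplication by `q n` and `q m` of `θ m` and `θ n` agree modulo `1`. -/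
theorem coe_q_mul_θ (n m c : ℕ) :
    ((q α n * (c * θ α m) : ℝ) : Circle1) = ((c * q α m * θ α n : ℝ) : Circle1) := by
  rw [← sub_eq_zero, ← AddCircle.coe_sub, AddCircle.coe_eq_zero_iff]
  refine ⟨c * (q α m * p α n - q α n * p α m), ?_⟩
  simp only [θ, zsmul_eq_mul]
  push_cast
  ring

theorem norm_smul_coe_le (hα : α ∈ Set.Ioo (0 : ℝ) 1) (hirr : Irrational α) {m c : ℕ}
    (hc : c * (q α m * |θ α m|) ≤ 2 / 3) (n : ℕ) :
    ‖(q α n : ℤ) • ((c * θ α m : ℝ) : Circle1)‖ ≤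
      4 * ((7 / 8 : ℝ) ^ ((n : ℤ) - m).natAbs * (7 / 8 : ℝ) ^ ((n : ℤ) - m).natAbs) := by
  have hpow : ∀ d : ℕ, (3 / 4 : ℝ) ^ d ≤ (7 / 8 : ℝ) ^ d * (7 / 8 : ℝ) ^ d := by
    intro d
    rw [← mul_pow]
    gcongr
    norm_num
  have hcoe : (q α n : ℤ) • ((c * θ α m : ℝ) : Circle1) =
      ((q α n * (c * θ α m) : ℝ) : Circle1) := by
    rw [← AddCircle.coe_zsmul]
    simp
  have hqm : (0 : ℝ) < q α m := by exact_mod_cast q_pos hα hirr m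
  rw [hcoe]
  refine le_trans ?_ (mul_le_mul_of_nonneg_left (hpow _) (by norm_num))
  rcases le_total n m with hnm | hmn
  · obtain ⟨d, rfl⟩ := Nat.exists_eq_add_of_le hnm
    have hd : ((n : ℤ) - (n + d : ℕ)).natAbs = d := by omega
    rw [hd]
    refine (coe_norm_le _).trans ?_
    rw [abs_mul, abs_mul, Nat.abs_cast, Nat.abs_cast]
    calc (q α n : ℝ) * (c * |θ α (n + d)|)
        ≤ 2 * (3 / 4 : ℝ) ^ d * q α (n + d) * (c * |θ α (n + d)|) := by
          gcongr
          exact q_le_pow_mul hα hirr n d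
      _ = 2 * (3 / 4 : ℝ) ^ d * (c * (q α (n + d) * |θ α (n + d)|)) := by ring
      _ ≤ 2 * (3 / 4 : ℝ) ^ d * 2 := by
          gcongr
          linarith
      _ = 4 * (3 / 4 : ℝ) ^ d := by ring
  · obtain ⟨d, rfl⟩ := Nat.exists_eq_add_of_le hmn
    have hd : (((m + d : ℕ) : ℤ) - m).natAbs = d := by omega
    rw [hd, coe_q_mul_θ]
    refine (coe_norm_le _).trans ?_
    rw [abs_mul, abs_mul, Nat.abs_cast, Nat.abs_cast]
    have hcq : (c * q α m : ℝ) ≤ 2 * q α (m + 1) := by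
      have h1 := one_le_abs_θ_mul_q hα hirr m
      calc (c * q α m : ℝ) = c * q α m * 1 := by ring
        _ ≤ c * q α m * (2 * (|θ α m| * q α (m + 1))) := by gcongr
        _ = 2 * (c * (q α m * |θ α m|)) * q α (m + 1) := by ring
        _ ≤ 2 * q α (m + 1) := by
          gcongr
          linarith
    have hgrow := q_le_pow_mul hα hirr (m + 1) d
    rw [show m + 1 + d = m + d + 1 by omega] at hgrow
    calc (c * q α m : ℝ) * |θ α (m + d)|
        ≤ 2 * (2 * (3 / 4 : ℝ) ^ d * q α (m + d + 1)) * |θ α (m + d)| :=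
          mul_le_mul_of_nonneg_right (by linarith) (abs_nonneg _)
      _ = 4 * (3 / 4 : ℝ) ^ d * (|θ α (m + d)| * q α (m + d + 1)) := by ring
      _ ≤ 4 * (3 / 4 : ℝ) ^ d * 1 := by
          gcongr
          exact abs_θ_mul_q_le hα hirr _
      _ = 4 * (3 / 4 : ℝ) ^ d := by ring

theorem exists_multiple (hα : α ∈ Set.Ioo (0 : ℝ) 1) (hirr : Irrational α) {m : ℕ}
    (hm : 3 * q α m ≤ 2 * q α (m + 1)) :
    ∃ c : ℕ, 1 / 3 ≤ c * (q α m * |θ α m|) ∧ c * (q α m * |θ α m|) ≤ 2 / 3 := by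
  have hqm : (0 : ℝ) < q α m := by exact_mod_cast q_pos hα hirr m
  have hθ : 0 < |θ α m| := by
    refine lt_of_le_of_ne (abs_nonneg _) fun h0 => ?_
    have := abs_θ_mul hα hirr m
    rw [← h0] at this
    simp at this
  have hm' : (3 * q α m : ℝ) ≤ 2 * q α (m + 1) := by exact_mod_cast hm
  have hle := abs_θ_mul_q_le hα hirr m
  have ht23 : q α m * |θ α m| ≤ 2 / 3 := by nlinarith
  have ht : 0 < q α m * |θ α m| := by positivity
  generalize q α m * |θ α m| = t at *
  by_cases h : 1 / 3 ≤ t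
  · exact ⟨1, by simpa using h, by simpa using ht23⟩
  · refine ⟨⌈1 / 3 / t⌉₊, ?_, ?_⟩
    · rw [← div_le_iff₀ ht]
      exact Nat.le_ceil _
    · have hceil := (Nat.ceil_lt_add_one (by positivity : 0 ≤ 1 / 3 / t)).le
      calc (⌈1 / 3 / t⌉₊ : ℝ) * t ≤ (1 / 3 / t + 1) * t := by gcongr
        _ = 1 / 3 + t := by field_simp
        _ ≤ 2 / 3 := by linarith

theorem exists_lacunaryFamily (hα : α ∈ Set.Ioo (0 : ℝ) 1) (hirr : Irrational α) :
    ∃ m u, LacunaryFamily (fun n => (q α n : ℤ)) m u := by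
  choose m hm1 hm2 hm3 using fun k : ℕ => exists_three_mul_q_le hα hirr (2 * k ^ 2)
  choose c hc1 hc2 using fun k : ℕ => exists_multiple hα hirr (hm3 k)
  have hlt : ∀ {i j : ℕ}, i < j → m i + j ≤ m j := by
    intro i j hij
    have h1 := hm2 i
    have h2 := hm1 j
    obtain ⟨d, rfl⟩ := Nat.exists_eq_add_of_lt hij
    nlinarith
  have hgap : ∀ k j, j ≠ k → k ≤ ((m k : ℤ) - m j).natAbs := by
    intro k j hjk
    rcases lt_or_gt_of_ne hjk with hlt' | hlt'
    · have := hlt hlt'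
      omega
    · have := hlt hlt'
      omega
  refine ⟨m, fun k => ((c k * θ α (m k) : ℝ) : Circle1), ?_⟩
  constructor
  · simp [q]
  · intro k
    have := hm1 k
    omega
  · exact hgap
  · intro i j hij
    by_contra hne
    rcases lt_or_gt_of_ne hne with h | h
    · have := hlt h
      omega
    · have := hlt h
      omega
  · exact fun n k => norm_smul_coe_le hα hirr (hc2 k) n
  · intro k
    have habs : |(q α (m k) : ℝ) * (c k * θ α (m k))| = c k * (q α (m k) * |θ α (m k)|) := by
      rw [abs_mul, abs_mul, Nat.abs_cast, Nat.abs_cast]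
      ring
    have hcoe : (q α (m k) : ℤ) • ((c k * θ α (m k) : ℝ) : Circle1) =
        ((q α (m k) * (c k * θ α (m k)) : ℝ) : Circle1) := by
      rw [← AddCircle.coe_zsmul]
      simp
    change 1 / 3 ≤ ‖(q α (m k) : ℤ) • ((c k * θ α (m k) : ℝ) : Circle1)‖
    rw [hcoe]
    exact third_le_norm_coe (habs ▸ hc1 k) (habs ▸ hc2 k)

end CF

open CF

/-- **Theorem C.** For irrational `α ∈ (0,1)`, `|t^s_(qₙ)(𝕋) \ t_(qₙ)(𝕋)| = 𝔠`. -/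
theorem stmt_1 (α : ℝ) (hα : α ∈ Set.Ioo (0 : ℝ) 1) (hirr : Irrational α) :
    Cardinal.mk
      ↥(statCharSet (fun n => (q α n : ℤ)) \ charSet (fun n => (q α n : ℤ))) =
      Cardinal.continuum := by
  obtain ⟨m, u, h⟩ := exists_lacunaryFamily hα hirr
  refine le_antisymm ?_ h.continuum_le
  calc Cardinal.mk _ ≤ Cardinal.mk Circle1 := Cardinal.mk_set_le _
    _ ≤ Cardinal.mk ℝ := Cardinal.mk_le_of_surjective QuotientAddGroup.mk_surjective
    _ = Cardinal.continuum := Cardinal.mk_real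
end
end

section
/- Let (fₙ) be the Fibonacci sequence, i.e. f₁ = 1, f₂ = 1 and fₙ = f_{n−1} + f_{n−2} for n ≥ 3. Then the statistically characterized subgroup t^s_{(fₙ)}(𝕋) is uncountable. -/
open Filter Topology

noncomputable section

open CF

open Real in
/-- Modulo `1`, the numbers `fib n * ψ ^ m` are symmetric in `n` and `m`. -/
lemma coe_fib_mul_goldenConj_pow_comm (n m : ℕ) :
    (((Nat.fib n : ℝ) * goldenConj ^ m : ℝ) : Circle1) =
      (((Nat.fib m : ℝ) * goldenConj ^ n : ℝ) : Circle1) := by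
  have key : (Nat.fib n : ℝ) * goldenConj ^ m = (Nat.fib m : ℝ) * goldenConj ^ n +
      ((((Nat.fib n : ℤ) * Nat.fib (m + 1) - Nat.fib m * Nat.fib (n + 1) : ℤ)) : ℝ) := by
    rw [← fib_succ_sub_goldenRatio_mul_fib, ← fib_succ_sub_goldenRatio_mul_fib]
    push_cast
    ring
  rw [key, AddCircle.coe_add]
  exact add_eq_left.2 (AddCircle.coe_eq_zero_iff (1 : ℝ) |>.2 ⟨_, zsmul_one _⟩)

open Real in
lemma fib_le_goldenRatio_pow (n : ℕ) : (Nat.fib n : ℝ) ≤ goldenRatio ^ n := by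
  rw [← fib_succ_sub_goldenConj_mul_fib]
  have h1 : (Nat.fib n : ℝ) ≤ Nat.fib (n + 1) := by exact_mod_cast Nat.fib_le_fib_succ
  have h2 : 0 ≤ -goldenConj * Nat.fib n :=
    mul_nonneg (neg_nonneg.2 goldenConj_neg.le) (Nat.cast_nonneg _)
  linarith

lemma AddCircle.norm_coe_le_abs (x : ℝ) : ‖(x : Circle1)‖ ≤ |x| := by
  simpa [UnitAddCircle.norm_eq] using round_le x 0

open Real in
lemma norm_coe_fib_mul_goldenConj_pow_le_of_le {n m : ℕ} (h : n ≤ m) :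
    ‖(((Nat.fib n : ℝ) * goldenConj ^ m : ℝ) : Circle1)‖ ≤ goldenRatio⁻¹ ^ (m - n) := by
  refine (AddCircle.norm_coe_le_abs _).trans ?_
  obtain ⟨k, rfl⟩ := Nat.exists_eq_add_of_le h
  have hψ : |goldenConj| = goldenRatio⁻¹ := by
    rw [abs_of_neg goldenConj_neg, inv_goldenRatio]
  rw [abs_mul, abs_pow, hψ, Nat.abs_cast, Nat.add_sub_cancel_left, pow_add, ← mul_assoc]
  have hpos : 0 < goldenRatio⁻¹ := inv_pos.2 goldenRatio_pos
  refine mul_le_of_le_one_left (by positivity) ?_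
  calc (Nat.fib n : ℝ) * goldenRatio⁻¹ ^ n ≤ goldenRatio ^ n * goldenRatio⁻¹ ^ n := by
        gcongr
        exact fib_le_goldenRatio_pow n
    _ = 1 := by rw [← mul_pow, mul_inv_cancel₀ goldenRatio_ne_zero, one_pow]

open Real in
/-- `fib n * ψ ^ m` is exponentially close to an integer when `n` and `m` are far apart. -/
lemma norm_coe_fib_mul_goldenConj_pow_le (n m : ℕ) :
    ‖(((Nat.fib n : ℝ) * goldenConj ^ m : ℝ) : Circle1)‖ ≤
      goldenRatio⁻¹ ^ ((n : ℤ) - m).natAbs := by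
  rcases le_total n m with h | h
  · rw [show ((n : ℤ) - m).natAbs = m - n by omega]
    exact norm_coe_fib_mul_goldenConj_pow_le_of_le h
  · rw [show ((n : ℤ) - m).natAbs = n - m by omega, coe_fib_mul_goldenConj_pow_comm]
    exact norm_coe_fib_mul_goldenConj_pow_le_of_le h

lemma summable_pow_natAbs_s5 {r : ℝ} (h0 : 0 ≤ r) (h1 : r < 1) :
    Summable fun k : ℤ => r ^ k.natAbs := by
  rw [summable_int_iff_summable_nat_and_neg]
  constructor <;> simpa using summable_geometric_of_lt_one h0 h1

open Real in
lemma goldenConj_sq_pos : 0 < goldenConj ^ 2 := by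
  have := goldenConj_ne_zero
  positivity

open Real in
lemma goldenConj_sq_lt_half : goldenConj ^ 2 < 1 / 2 := by
  have h5 : (2 : ℝ) < √5 := by
    rw [Real.lt_sqrt] <;> norm_num
  rw [goldenConj_sq, goldenConj]
  linarith

open Real Cardinal in
/-- `fib n • x` is small for `x = ∑ ψ ^ (2 * m)` over the `m` with `h m`, as soon as `n` avoids
finitely many translates of the set of exponents. -/
lemma exists_finset_norm_fib_smul_cantorFunction_lt (h : ℕ → Bool) {ε : ℝ} (hε : 0 < ε) :
    ∃ s : Finset ℤ, ∀ n : ℕ, (∀ m : ℕ, h m = true → (n : ℤ) - (2 * m : ℕ) ∉ s) →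
      ‖(Nat.fib n : ℤ) • ((cantorFunction (goldenConj ^ 2) h : ℝ) : Circle1)‖ < ε := by
  have hr0 : 0 ≤ goldenRatio⁻¹ := inv_nonneg.2 goldenRatio_pos.le
  obtain ⟨s, hs⟩ := summable_iff_vanishing_norm.1
    (summable_pow_natAbs_s5 hr0 (inv_lt_one_of_one_lt₀ one_lt_goldenRatio)) (ε / 2) (half_pos hε)
  refine ⟨s, fun n hn => ?_⟩
  have hsum : HasSum (cantorFunctionAux (goldenConj ^ 2) h) (cantorFunction (goldenConj ^ 2) h) :=
    (summable_cantor_function h goldenConj_sq_pos.le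
      (goldenConj_sq_lt_half.trans (by norm_num))).hasSum
  have hcont : Continuous fun x : ℝ => ‖((Nat.fib n * x : ℝ) : Circle1)‖ :=
    ((AddCircle.continuous_mk' (1 : ℝ)).comp (continuous_const.mul continuous_id)).norm
  have hlim := (hcont.tendsto (cantorFunction (goldenConj ^ 2) h)).comp hsum
  have hle : ‖((Nat.fib n * cantorFunction (goldenConj ^ 2) h : ℝ) : Circle1)‖ ≤ ε / 2 := by
    refine le_of_tendsto hlim (Eventually.of_forall fun u => ?_)
    have hinj : Set.InjOn (fun m : ℕ => (n : ℤ) - (2 * m : ℕ)) (u.filter (h · = true)) := by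
      intro a _ b _ hab
      simp only at hab
      omega
    have hdisj : Disjoint ((u.filter (h · = true)).image fun m : ℕ => (n : ℤ) - (2 * m : ℕ)) s := by
      rw [Finset.disjoint_left]
      intro k hk
      obtain ⟨m, hm, rfl⟩ := Finset.mem_image.1 hk
      exact hn m (Finset.mem_filter.1 hm).2
    have hlt := (le_abs_self _).trans_lt (hs _ hdisj)
    rw [Finset.sum_image hinj, Finset.sum_filter] at hlt
    refine le_trans ?_ hlt.le
    have hcoe : ((Nat.fib n * ∑ m ∈ u, cantorFunctionAux (goldenConj ^ 2) h m : ℝ) : Circle1) =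
        ∑ m ∈ u, ((Nat.fib n * cantorFunctionAux (goldenConj ^ 2) h m : ℝ) : Circle1) := by
      rw [Finset.mul_sum]
      exact map_sum (QuotientAddGroup.mk' (AddSubgroup.zmultiples (1 : ℝ))) _ _
    simp only [Function.comp_apply]
    refine (congrArg norm hcoe).le.trans ((norm_sum_le _ _).trans (Finset.sum_le_sum fun m _ => ?_))
    by_cases hm : h m = true
    · rw [cantorFunctionAux_true hm, if_pos hm, ← pow_mul]
      exact norm_coe_fib_mul_goldenConj_pow_le n (2 * m)
    · rw [cantorFunctionAux_false (by simpa using hm), if_neg hm]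
      simp
  have hsmul : (Nat.fib n : ℤ) • ((cantorFunction (goldenConj ^ 2) h : ℝ) : Circle1) =
      ((Nat.fib n * cantorFunction (goldenConj ^ 2) h : ℝ) : Circle1) := by
    rw [← AddCircle.coe_zsmul, zsmul_eq_mul, Int.cast_natCast]
  rw [hsmul]
  linarith

lemma DensityZero.mono {A B : Set ℕ} (hAB : A ⊆ B) (hB : DensityZero B) : DensityZero A := by
  refine squeeze_zero (fun n => by positivity) (fun n => ?_) hB
  gcongr
  exact (Set.finite_Icc 1 n).inter_of_right B

/-- A finite union of translates of twice the squares has density zero. -/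
lemma densityZero_translates_two_mul_sq (s : Finset ℤ) :
    DensityZero {n : ℕ | ∃ j : ℕ, (n : ℤ) - 2 * (j : ℤ) ^ 2 ∈ s} := by
  obtain ⟨K, hK⟩ : ∃ K : ℕ, ∀ k ∈ s, k.natAbs ≤ K :=
    ⟨s.sup Int.natAbs, fun k hk => Finset.le_sup (f := Int.natAbs) hk⟩
  have hcard : ∀ N : ℕ, (({n : ℕ | ∃ j : ℕ, (n : ℤ) - 2 * (j : ℤ) ^ 2 ∈ s} ∩
      Set.Icc 1 N).ncard : ℝ) ≤ s.card * (√N + √K + 1) := by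
    intro N
    have hsub : ({n : ℕ | ∃ j : ℕ, (n : ℤ) - 2 * (j : ℤ) ^ 2 ∈ s} ∩ Set.Icc 1 N) ⊆
        ((s ×ˢ Finset.range (Nat.sqrt (N + K) + 1)).image
          fun p : ℤ × ℕ => (p.1 + 2 * (p.2 : ℤ) ^ 2).toNat : Finset ℕ) := by
      rintro n ⟨⟨j, hj⟩, -, hnN⟩
      have hk := hK _ hj
      simp only [Finset.coe_image, Set.mem_image, Finset.mem_coe, Finset.mem_product,
        Finset.mem_range, Prod.exists]
      refine ⟨_, j, ⟨hj, Nat.lt_succ_of_le (Nat.le_sqrt'.2 ?_)⟩, by simp⟩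
      zify
      have := sq_nonneg (j : ℤ)
      omega
    have h1 := (Set.ncard_le_ncard hsub (Finset.finite_toSet _)).trans
      ((Set.ncard_coe_finset _).le.trans Finset.card_image_le)
    rw [Finset.card_product, Finset.card_range] at h1
    calc (_ : ℝ) ≤ ((s.card * (Nat.sqrt (N + K) + 1) : ℕ) : ℝ) := by exact_mod_cast h1
      _ ≤ s.card * (√N + √K + 1) := by
        push_cast
        gcongr
        refine Real.nat_sqrt_le_real_sqrt.trans ?_
        push_cast
        rw [Real.sqrt_le_left (by positivity), add_sq, Real.sq_sqrt N.cast_nonneg,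
          Real.sq_sqrt K.cast_nonneg, add_right_comm]
        exact le_add_of_nonneg_right (by positivity)
  refine squeeze_zero (g := fun N : ℕ => s.card * ((√N)⁻¹ + (√K + 1) * (N : ℝ)⁻¹))
    (fun n => by positivity) (fun N => ?_) ?_
  · refine (div_le_div_of_nonneg_right (hcard N) N.cast_nonneg).trans (le_of_eq ?_)
    rw [← Real.sqrt_div_self]
    ring
  · have h1 : Tendsto (fun N : ℕ => (√N)⁻¹) atTop (𝓝 0) :=
      tendsto_inv_atTop_zero.comp (Real.tendsto_sqrt_atTop.comp tendsto_natCast_atTop_atTop)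
    have h2 := (h1.add (tendsto_inv_atTop_nhds_zero_nat (𝕜 := ℝ) |>.const_mul (√K + 1))).const_mul
      (s.card : ℝ)
    simpa using h2

open Classical in
/-- The indicator of the squares `(j + 1) ^ 2` with `j ∈ S`. -/
def squareCode (S : Set ℕ) (m : ℕ) : Bool := decide (∃ j ∈ S, m = (j + 1) ^ 2)

lemma squareCode_eq_true_iff {S : Set ℕ} {m : ℕ} :
    squareCode S m = true ↔ ∃ j ∈ S, m = (j + 1) ^ 2 := by
  simp [squareCode]

lemma squareCode_injective : Function.Injective squareCode := by
  intro S T hST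
  ext j
  have hmem : ∀ U : Set ℕ, squareCode U ((j + 1) ^ 2) = true ↔ j ∈ U := by
    intro U
    simp [squareCode_eq_true_iff]
  rw [← hmem S, ← hmem T, hST]

open Real Cardinal in
lemma cantorFunction_squareCode_mem_Ico (S : Set ℕ) :
    cantorFunction (goldenConj ^ 2) (squareCode S) ∈ Set.Ico (0 : ℝ) (0 + 1) := by
  have h0 := goldenConj_sq_pos
  have h1 := goldenConj_sq_lt_half
  have h2 : goldenConj ^ 2 < 1 := h1.trans (by norm_num)
  refine ⟨tsum_nonneg fun n => cantorFunctionAux_nonneg h0.le, ?_⟩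
  have hz : squareCode S 0 = false := by
    rw [← Bool.not_eq_true, squareCode_eq_true_iff]
    rintro ⟨j, -, hj⟩
    exact (pow_pos j.succ_pos 2).ne hj
  rw [cantorFunction_succ _ h0.le h2, hz]
  have hle : cantorFunction (goldenConj ^ 2) (fun n => squareCode S (n + 1)) ≤
      cantorFunction (goldenConj ^ 2) (fun _ => true) := cantorFunction_le h0.le h2 (by simp)
  have hgeom : cantorFunction (goldenConj ^ 2) (fun _ => true) = (1 - goldenConj ^ 2)⁻¹ := by
    simp only [cantorFunction, cantorFunctionAux_true, tsum_geometric_of_lt_one h0.le h2]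
  have hinv : (1 - goldenConj ^ 2)⁻¹ ≤ 2 := by
    rw [inv_le_comm₀] <;> linarith
  simp only [cond_false, zero_add]
  nlinarith

lemma eq_fib_of_recurrence {f : ℕ → ℕ} (h1 : f 1 = 1) (h2 : f 2 = 1)
    (hrec : ∀ n, 3 ≤ n → f n = f (n - 1) + f (n - 2)) (n : ℕ) : f (n + 1) = Nat.fib (n + 1) := by
  induction n using Nat.twoStepInduction with
  | zero => simpa using h1
  | one => simpa using h2
  | more n ih1 ih2 =>
    rw [hrec (n + 2 + 1) (by omega), Nat.fib_add_two (n := n + 1), ← ih1, ← ih2, add_comm]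
    rfl

/-- **Corollary 2.4.** For the Fibonacci sequence `(fₙ)`, `t^s_(fₙ)(𝕋)` is uncountable. -/
theorem stmt_5 (f : ℕ → ℕ) (h1 : f 1 = 1) (h2 : f 2 = 1)
    (hrec : ∀ n, 3 ≤ n → f n = f (n - 1) + f (n - 2)) :
    ¬ (statCharSet (fun n => (f (n + 1) : ℤ))).Countable := by
  intro hcount
  have hmem : ∀ S : Set ℕ,
      ((Cardinal.cantorFunction (Real.goldenConj ^ 2) (squareCode S) : ℝ) : Circle1) ∈
        statCharSet (fun n => (f (n + 1) : ℤ)) := by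
    intro S ε hε
    obtain ⟨s, hs⟩ := exists_finset_norm_fib_smul_cantorFunction_lt (squareCode S) hε
    refine (densityZero_translates_two_mul_sq (s.image (· - 1))).mono fun n hn => ?_
    by_contra hfar
    refine (hs (n + 1) fun m hm hms => hfar ?_).not_ge ?_
    · obtain ⟨j, -, rfl⟩ := squareCode_eq_true_iff.1 hm
      refine ⟨j + 1, Finset.mem_image.2 ⟨_, hms, ?_⟩⟩
      push_cast
      ring
    · simpa only [Set.mem_ofPred_eq, eq_fib_of_recurrence h1 h2 hrec] using hn
  have := hcount.to_subtype
  obtain ⟨e, he⟩ := exists_injective_nat (statCharSet (fun n => (f (n + 1) : ℤ)))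
  refine Function.cantor_injective (fun S : Set ℕ => e ⟨_, hmem S⟩) fun S T hST => ?_
  have hcoe := congrArg Subtype.val (he hST)
  exact squareCode_injective <| Cardinal.cantorFunction_injective goldenConj_sq_pos
    goldenConj_sq_lt_half <| (AddCircle.coe_eq_coe_iff_of_mem_Ico
      (cantorFunction_squareCode_mem_Ico S) (cantorFunction_squareCode_mem_Ico T)).1 hcoe
end
end
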